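/- Let (Θ, 𝒜, π) be a probability measure space, L_D : Θ → ℝ≥0 measurable and π-integrable with Z = ∫_Θ L_D dπ ∈ (0, ∞), and let π_D = π.withDensity(L_D/Z) be the posterior. Let 𝒰 be a finite nonempty set of candidate actions (unlabeled points) and for each a ∈ 𝒰 let L_a : Θ → ℝ≥0 be measurable with L_a · L_D π-integrable, where L_a(θ) is the pseudo-label likelihood of augmenting D by the point a with its pseudo-label. Then an action a* ∈ 𝒰 maximizes the Bayes criterion Φ(a, π_D) = ∫_Θ L_a(θ) dπ_D(θ) over 𝒰 if and only if a* maximizes the pseudo posterior predictive a ↦ (1/Z) ∫_Θ L_a(θ) L_D(θ) dπ(θ) over 𝒰; consequently, a Bayes-optimal selection in pseudo-label selection is exactly a maximizer of the pseudo posterior predictive, and such a maximizer exists since 𝒰 is finite and nonempty. -/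

import Mathlib

open MeasureTheory

section WithDensity

variable {α E : Type*} [MeasurableSpace α] [NormedAddCommGroup E] [NormedSpace ℝ E]
  {μ : Measure α} {f : α → NNReal}

theorem aemeasurable_of_integral_coe_ne_zero (h : ∫ x, (f x : ℝ) ∂μ ≠ 0) : AEMeasurable f μ :=
  aemeasurable_coe_nnreal_real_iff.mp (Integrable.of_integral_ne_zero h).aemeasurable

theorem integral_withDensity_div (hf : AEMeasurable f μ) (c : NNReal) (g : α → E) :
    ∫ x, g x ∂μ.withDensity (fun x => ((f x / c : NNReal) : ENNReal)) =
      (c : ℝ)⁻¹ • ∫ x, (f x : ℝ) • g x ∂μ :=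
  calc ∫ x, g x ∂μ.withDensity (fun x => ((f x / c : NNReal) : ENNReal))
    _ = ∫ x, (f x / c) • g x ∂μ :=
      integral_withDensity_eq_integral_smul₀ (hf.div_const c) g
    _ = ∫ x, (c : ℝ)⁻¹ • (f x : ℝ) • g x ∂μ := by
      simp only [NNReal.smul_def, div_eq_inv_mul, mul_smul, NNReal.coe_inv]
    _ = (c : ℝ)⁻¹ • ∫ x, (f x : ℝ) • g x ∂μ := integral_smul _ _

theorem integrable_withDensity_div (hf : AEMeasurable f μ) (c : NNReal) {g : α → E}
    (hg : Integrable (fun x => (f x : ℝ) • g x) μ) :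
    Integrable g (μ.withDensity (fun x => ((f x / c : NNReal) : ENNReal))) := by
  rw [integrable_withDensity_iff_integrable_coe_smul₀ (hf.div_const c)]
  simpa only [div_eq_inv_mul, NNReal.coe_mul, NNReal.coe_inv, mul_smul] using hg.fun_smul (c : ℝ)⁻¹

end WithDensity

section BayesCriterion

variable {Θ A : Type*} [MeasurableSpace Θ]

/-- The posterior measure on the parameter space obtained from the prior `π` and the likelihood
`ℓ`. The normalizing constant `Z` is an explicit argument; it stands for `∫ ℓ dπ`. -/
noncomputable def bayesPosterior (π : Measure Θ) (ℓ : Θ → NNReal) (Z : NNReal) : Measure Θ :=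
  π.withDensity (fun θ => ((ℓ θ / Z : NNReal) : ENNReal))

/-- The Bayes criterion `Φ(a, μ) = E_μ[u(a, ·)]` of the action `a`, by which actions are ranked
once the belief about the parameter is `μ`. The utility `u` may be any real function. -/
noncomputable def bayesCriterion (u : A → Θ → ℝ) (μ : Measure Θ) (a : A) : ℝ :=
  ∫ θ, u a θ ∂μ

/-- The pseudo posterior predictive `(1/Z) ∫ u(a, ·) ℓ dπ` of the action `a`, which scores `a`
by an integral against the prior. In pseudo-label selection `u(a, ·)` is the pseudo-label
likelihood of `a`. -/
noncomputable def pseudoPosteriorPredictive (u : A → Θ → ℝ) (π : Measure Θ) (ℓ : Θ → NNReal)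
    (Z : NNReal) (a : A) : ℝ :=
  (1 / (Z : ℝ)) * ∫ θ, u a θ * (ℓ θ : ℝ) ∂π

theorem bayesCriterion_bayesPosterior {π : Measure Θ} {ℓ : Θ → NNReal} (hℓ : AEMeasurable ℓ π)
    (Z : NNReal) (u : A → Θ → ℝ) :
    bayesCriterion u (bayesPosterior π ℓ Z) = pseudoPosteriorPredictive u π ℓ Z := by
  funext a
  simp only [bayesCriterion, bayesPosterior, pseudoPosteriorPredictive,
    integral_withDensity_div hℓ, smul_eq_mul, one_div, mul_comm (u a _)]

theorem bayes_optimal_iff_max_pseudo_posterior_predictive_general (π : Measure Θ)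
    (ℓ : Θ → NNReal) (Z : NNReal) (hZpos : 0 < Z) (hZ : ∫ θ, (ℓ θ : ℝ) ∂π = (Z : ℝ))
    (S : Set A) (u : A → Θ → ℝ) (hu : ∀ a ∈ S, Integrable (fun θ => u a θ * (ℓ θ : ℝ)) π) :
    (∀ a ∈ S, Integrable (u a) (bayesPosterior π ℓ Z)) ∧
      ∀ astar, IsMaxOn (bayesCriterion u (bayesPosterior π ℓ Z)) S astar ↔
        IsMaxOn (pseudoPosteriorPredictive u π ℓ Z) S astar := by
  have hℓ : AEMeasurable ℓ π :=
    aemeasurable_of_integral_coe_ne_zero (hZ.trans_ne (NNReal.coe_ne_zero.mpr hZpos.ne'))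
  refine ⟨fun a ha => integrable_withDensity_div hℓ Z ?_, fun astar => ?_⟩
  · simpa only [smul_eq_mul, mul_comm] using hu a ha
  · rw [bayesCriterion_bayesPosterior hℓ]

end BayesCriterion

/-- **Bayes-optimal pseudo-label selection maximizes the pseudo posterior
predictive.** Let `(Θ, 𝒜, π)` be a probability measure space, `L_D : Θ → ℝ≥0`
measurable and `π`-integrable with `Z = ∫ L_D dπ ∈ (0, ∞)`, and
`π_D = π.withDensity (L_D / Z)` the posterior. Let `𝒰` be a finite nonempty set
of candidate actions (unlabeled points) and for each `a ∈ 𝒰` let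
`L a : Θ → ℝ≥0` be measurable with `L a * L_D` `π`-integrable, `L a θ` being the
pseudo-label likelihood of augmenting `D` by `a` with its pseudo-label. Then
`a* ∈ 𝒰` maximizes the Bayes criterion `Φ(a, π_D) = ∫ L a dπ_D` over `𝒰` iff
`a*` maximizes the pseudo posterior predictive
`a ↦ (1/Z) ∫ L a · L_D dπ` over `𝒰`; moreover a maximizer of the Bayes
criterion exists since `𝒰` is finite and nonempty. -/
theorem bayes_optimal_iff_max_pseudo_posterior_predictive
    {Θ : Type*} [MeasurableSpace Θ] (π : Measure Θ) [IsProbabilityMeasure π]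
    -- likelihood of the labeled data `D` and normalizing constant
    (L_D : Θ → NNReal) (hLDmeas : Measurable L_D)
    (hLDint : Integrable (fun θ => (L_D θ : ℝ)) π)
    (Z : NNReal) (hZpos : 0 < Z) (hZ : ∫ θ, (L_D θ : ℝ) ∂π = (Z : ℝ))
    -- posterior `π_D` with density `L_D / Z` with respect to `π`
    (π_D : Measure Θ)
    (hπD : π_D = π.withDensity (fun θ => ((L_D θ / Z : NNReal) : ENNReal)))
    -- finite nonempty set of candidate actions (unlabeled points)
    {A : Type*} (𝒰 : Finset A) (h𝒰 : 𝒰.Nonempty)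
    -- pseudo-label likelihoods of the candidate actions
    (L : A → Θ → NNReal) (hLmeas : ∀ a ∈ 𝒰, Measurable (L a))
    (hLLDint : ∀ a ∈ 𝒰, Integrable (fun θ => (L a θ : ℝ) * (L_D θ : ℝ)) π) :
    (∀ astar ∈ 𝒰,
        ((∀ a ∈ 𝒰, ∫ θ, (L a θ : ℝ) ∂π_D ≤ ∫ θ, (L astar θ : ℝ) ∂π_D) ↔
          (∀ a ∈ 𝒰,
            (1 / (Z : ℝ)) * ∫ θ, (L a θ : ℝ) * (L_D θ : ℝ) ∂π ≤
              (1 / (Z : ℝ)) * ∫ θ, (L astar θ : ℝ) * (L_D θ : ℝ) ∂π))) ∧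
      ∃ astar ∈ 𝒰,
        ∀ a ∈ 𝒰, ∫ θ, (L a θ : ℝ) ∂π_D ≤ ∫ θ, (L astar θ : ℝ) ∂π_D := by
  subst hπD
  exact ⟨fun astar _ => (bayes_optimal_iff_max_pseudo_posterior_predictive_general π L_D Z hZpos hZ
    (𝒰 : Set A) (fun a θ => (L a θ : ℝ)) hLLDint).2 astar, 𝒰.exists_max_image _ h𝒰⟩
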